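/- arXiv:2507.04653 — 2 statements merged into one kernel-verified Lean document; each statement's English description precedes it below -/
import Mathlib

section
/- For all positive integers α, m, n, r, the polynomial ∑_{k=1}^{n} (-1)^k·k^r·(k+1)^r·(2k+1)·w_k^{(α)}(x)^m in ℤ[x] has all its coefficients divisible by n(n+1)(n+2)/gcd(2,n). -/
open Polynomial

/-- `w(k,j) = C(k-1,j-1)·C(k+j,j) − C(k,j)·C(k+j,j-1)`. -/
def w (k j : ℕ) : ℤ :=
  ((k - 1).choose (j - 1) * (k + j).choose j : ℤ) - (k.choose j * (k + j).choose (j - 1) : ℤ)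

/-- `w_k^{(α)}(x) = ∑_{j=1}^{k} w(k,j)^α x^{j-1}` in `ℤ[x]`. -/
noncomputable def wPoly (α k : ℕ) : Polynomial ℤ :=
  ∑ j ∈ Finset.Icc 1 k, Polynomial.C ((w k j) ^ α) * X ^ (j - 1)

/-!
As a function of `k ≥ 1`, `w k (j + 1)` is the product over `1 ≤ i ≤ j` of `k(k+1)/(i(i+1)) - 1`.
Hence `w k i * w k j` is a linear combination of the `w k l`, and its coefficients
`C(i+j,l+1) C(l,i) C(l,j) / l` turn out to be integers. So the integral span of the functions
`k ↦ w k j` is a ring; it contains `k(k+1) = 2 (w k 2 + w k 1)` and the coefficients of the powers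
of `w_k^{(α)}(x)`. By linearity it suffices to sum `(-1)^k (2k+1) k(k+1) w k j`, and this sum
telescopes to `(-1)^n (n+1) j C(n,j) C(n+j+1,j)`, where `j C(n,j) C(n+j+1,j)` is divisible by both
`n` and `n+2`.
-/

theorem cast_succ_mul_choose_succ (n k : ℕ) :
    ((k : ℤ) + 1) * n.choose (k + 1) = (n - k) * n.choose k := by
  rcases le_or_gt k n with h | h
  · have := Nat.choose_succ_right_eq n k
    zify [h] at this
    linarith
  · simp [Nat.choose_eq_zero_of_lt h, Nat.choose_eq_zero_of_lt (Nat.lt_succ_of_lt h)]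

theorem cast_succ_mul_choose (n k : ℕ) :
    ((n : ℤ) + 1) * n.choose k = (n + 1 - k) * (n + 1).choose k := by
  have h := cast_succ_mul_choose_succ (n + 1) k
  have h' : ((n : ℤ) + 1) * n.choose k = (n + 1).choose (k + 1) * (k + 1) :=
    mod_cast Nat.add_one_mul_choose_eq n k
  push_cast at h
  linarith

theorem dvd_mul_choose (n k : ℕ) : n ∣ k * n.choose k := by
  rcases n with _ | n <;> rcases k with _ | k
  · simp
  · simp
  · simp
  · exact ⟨n.choose k, by rw [Nat.add_one_mul_choose_eq, mul_comm]⟩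

/-- The pronic number `k(k+1)`. As a function of `k`, each `w k j` is a polynomial in `pronic k`. -/
def pronic (k : ℕ) : ℤ := k * (k + 1)

theorem pronic_pos {k : ℕ} (hk : 1 ≤ k) : 0 < pronic k := by
  have : (0 : ℤ) < k := mod_cast hk
  unfold pronic
  positivity

theorem w_zero_right (k : ℕ) : w k 0 = 0 := by
  simp [w]

theorem w_one_right (k : ℕ) : w k 1 = 1 := by
  simp [w]

theorem w_eq_zero_of_lt {k j : ℕ} (hk : 1 ≤ k) (h : k < j) : w k j = 0 := by
  simp [w, Nat.choose_eq_zero_of_lt h, Nat.choose_eq_zero_of_lt (show k - 1 < j - 1 by omega)]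

theorem pronic_mul_w (k j : ℕ) :
    pronic k * w k j = j * k.choose j * (k + j).choose j := by
  rcases k with _ | k <;> rcases j with _ | j
  · simp [pronic]
  · simp [pronic]
  · simp [w]
  · have h₁ : ((k : ℤ) + 1) * k.choose j = (k + 1).choose (j + 1) * (j + 1) :=
      mod_cast Nat.add_one_mul_choose_eq k j
    have h₂ := cast_succ_mul_choose_succ (k + 1 + (j + 1)) j
    simp only [w, pronic, Nat.add_sub_cancel]
    push_cast at *
    linear_combination ((k : ℤ) + 2) * ((k + 1 + (j + 1)).choose (j + 1) : ℤ) * h₁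
      + ((k : ℤ) + 1) * ((k + 1).choose (j + 1) : ℤ) * h₂

theorem pronic_sub_pronic_mul_w {k : ℕ} (hk : 1 ≤ k) (j : ℕ) :
    (pronic k - pronic j) * w k j = pronic j * w k (j + 1) := by
  have h₁ := cast_succ_mul_choose_succ k j
  have h₂ : ((k : ℤ) + j + 1) * (k + j).choose j = (k + j + 1).choose (j + 1) * (j + 1) :=
    mod_cast Nat.add_one_mul_choose_eq (k + j) j
  have hj := pronic_mul_w k j
  have hj₁ := pronic_mul_w k (j + 1)
  rw [← add_assoc] at hj₁
  apply mul_left_cancel₀ (pronic_pos hk).ne'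
  calc pronic k * ((pronic k - pronic j) * w k j)
      = (pronic k - pronic j) * (j * k.choose j * (k + j).choose j) := by rw [← hj]; ring
    _ = j * ((k - j) * k.choose j) * ((k + j + 1) * (k + j).choose j) := by
      simp only [pronic]; ring
    _ = pronic j * (pronic k * w k (j + 1)) := by
      rw [← h₁, h₂, hj₁]; simp only [pronic]; push_cast; ring
    _ = pronic k * (pronic j * w k (j + 1)) := by ring

theorem dvd_choose_mul_choose_mul_choose (i j l : ℕ) :
    l ∣ (i + j).choose (l + 1) * l.choose i * l.choose j := by
  have h : (l + 1) * (i + j).choose (l + 1) = (i + j) * (i + j - 1).choose l := by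
    rcases i + j with _ | s
    · simp
    · rw [Nat.add_sub_cancel, Nat.add_one_mul_choose_eq, mul_comm]
  have hi := (dvd_mul_choose l i).mul_left ((i + j - 1).choose l * l.choose j)
  have hj := (dvd_mul_choose l j).mul_left ((i + j - 1).choose l * l.choose i)
  refine (Nat.dvd_add_right
    (dvd_mul_right l ((i + j).choose (l + 1) * l.choose i * l.choose j))).mp ?_
  convert Nat.dvd_add hi hj using 1
  linear_combination l.choose i * l.choose j * h

/-- The coefficient of `w k l` in the expansion of `w k i * w k j`. The division is exact, and the
junk value at `l = 0` is harmless because `w k 0 = 0`. -/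
def wStructConst (i j l : ℕ) : ℕ :=
  (i + j).choose (l + 1) * l.choose i * l.choose j / l

theorem mul_wStructConst (i j l : ℕ) :
    (l : ℤ) * wStructConst i j l = (i + j).choose (l + 1) * l.choose i * l.choose j :=
  mod_cast Nat.mul_div_cancel' (dvd_choose_mul_choose_mul_choose i j l)

theorem wStructConst_eq_zero_of_le {i j l : ℕ} (h : i + j ≤ l) : wStructConst i j l = 0 := by
  simp [wStructConst, Nat.choose_eq_zero_of_lt (Nat.lt_succ_of_le h)]

theorem wStructConst_one_left (j : ℕ) {l : ℕ} (hl : l ≠ 0) :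
    wStructConst 1 j l = if l = j then 1 else 0 := by
  rcases lt_trichotomy l j with h | rfl | h
  · simp [wStructConst, Nat.choose_eq_zero_of_lt h, h.ne]
  · simp [wStructConst, add_comm 1, Nat.div_self (Nat.pos_of_ne_zero hl)]
  · rw [wStructConst_eq_zero_of_le (by omega), if_neg h.ne']

theorem pronic_mul_wStructConst_succ_succ (i j l : ℕ) :
    pronic i * wStructConst (i + 1) j (l + 1) =
      pronic l * wStructConst i j l +
        (pronic (l + 1) - pronic i) * wStructConst i j (l + 1) := by
  have h₀ : ((l : ℤ) + 1) * (pronic l * wStructConst i j l) =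
      (l + 1 - i) * (l + 1 - j) *
        ((i + j).choose (l + 1) * (l + 1).choose i * (l + 1).choose j) := by
    simp only [pronic]
    linear_combination ((l : ℤ) + 1) ^ 2 * mul_wStructConst i j l
      + (l + 1) * (i + j).choose (l + 1) * l.choose j * cast_succ_mul_choose l i
      + (l + 1 - i) * (i + j).choose (l + 1) * (l + 1).choose i * cast_succ_mul_choose l j
  have h₁ : ((l : ℤ) + 1) * wStructConst i j (l + 1) =
      (i + j).choose (l + 2) * (l + 1).choose i * (l + 1).choose j :=
    mod_cast mul_wStructConst i j (l + 1)
  have h₂ : ((l : ℤ) + 1) * (pronic i * wStructConst (i + 1) j (l + 1)) =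
      i * (l + 1 - i) * (((i + j).choose (l + 1) + (i + j).choose (l + 2)) *
        (l + 1).choose i * (l + 1).choose j) := by
    have hS := mul_wStructConst (i + 1) j (l + 1)
    rw [add_right_comm i 1 j, Nat.choose_succ_succ (i + j) (l + 1)] at hS
    have hi := cast_succ_mul_choose_succ (l + 1) i
    simp only [pronic]
    push_cast at *
    linear_combination (i : ℤ) * (i + 1) * hS + i * ((i + j).choose (l + 1) +
      (i + j).choose (l + 2)) * (l + 1).choose j * hi
  have hpronic : pronic (l + 1) - pronic i = (l + 1 - i) * (l + 2 + i) := by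
    simp only [pronic]
    push_cast
    ring
  have hchoose := cast_succ_mul_choose_succ (i + j) (l + 1)
  apply mul_left_cancel₀ (show (l : ℤ) + 1 ≠ 0 by positivity)
  push_cast at hchoose
  linear_combination h₂ - h₀ - (l + 1 - i) * (l + 2 + i) * h₁ - (l + 1) *
    wStructConst i j (l + 1) * hpronic - (l + 1 - i) * (l + 1).choose i * (l + 1).choose j * hchoose

theorem sum_wStructConst_one_left_mul_w (k j : ℕ) :
    ∑ l ∈ Finset.range (1 + j), wStructConst 1 j l * w k l = w k j := by
  have h : ∀ l, (wStructConst 1 j l : ℤ) * w k l = if l = j then w k l else 0 := by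
    intro l
    rcases eq_or_ne l 0 with rfl | hl
    · simp [w_zero_right]
    · simp [wStructConst_one_left j hl]
  simp [h]

theorem pronic_mul_sum_wStructConst_succ_left_mul_w {k : ℕ} (hk : 1 ≤ k) (i j : ℕ) :
    pronic i * ∑ l ∈ Finset.range (i + 1 + j), wStructConst (i + 1) j l * w k l =
      (pronic k - pronic i) * ∑ l ∈ Finset.range (i + j), wStructConst i j l * w k l := by
  have hshift : ∑ l ∈ Finset.range (i + j),
        (pronic (l + 1) - pronic i) * wStructConst i j (l + 1) * w k (l + 1) =
      ∑ l ∈ Finset.range (i + j), (pronic l - pronic i) * wStructConst i j l * w k l := by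
    rw [← sub_eq_zero, ← Finset.sum_sub_distrib, Finset.sum_range_sub
      fun l => (pronic l - pronic i) * wStructConst i j l * w k l]
    simp [wStructConst_eq_zero_of_le, w_zero_right]
  calc pronic i * ∑ l ∈ Finset.range (i + 1 + j), wStructConst (i + 1) j l * w k l
      = ∑ l ∈ Finset.range (i + j),
          pronic i * wStructConst (i + 1) j (l + 1) * w k (l + 1) := by
        rw [add_right_comm, Finset.sum_range_succ', w_zero_right, mul_zero, add_zero,
          Finset.mul_sum]
        simp only [mul_assoc]
    _ = ∑ l ∈ Finset.range (i + j),
          (pronic l * wStructConst i j l * w k (l + 1) +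
            (pronic l - pronic i) * wStructConst i j l * w k l) := by
        rw [Finset.sum_add_distrib, ← hshift, ← Finset.sum_add_distrib]
        simp only [pronic_mul_wStructConst_succ_succ, add_mul]
    _ = (pronic k - pronic i) * ∑ l ∈ Finset.range (i + j), wStructConst i j l * w k l := by
        rw [Finset.mul_sum]
        refine Finset.sum_congr rfl fun l _ => ?_
        linear_combination -(wStructConst i j l : ℤ) * pronic_sub_pronic_mul_w hk l

theorem w_mul_w {k i : ℕ} (hk : 1 ≤ k) (hi : 1 ≤ i) (j : ℕ) :
    w k i * w k j = ∑ l ∈ Finset.range (i + j), wStructConst i j l * w k l := by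
  induction i, hi using Nat.le_induction with
  | base => rw [w_one_right, one_mul, sum_wStructConst_one_left_mul_w]
  | succ i hi ih =>
    apply mul_left_cancel₀ (pronic_pos hi).ne'
    rw [pronic_mul_sum_wStructConst_succ_left_mul_w hk, ← ih, ← mul_assoc, ← mul_assoc,
      pronic_sub_pronic_mul_w hk]

/-- The functions of `k ≥ 1` that are integral linear combinations of the `k ↦ w k j`.
The argument `k = 0` is excluded because the truncated `k - 1` in `w` spoils the recurrence
`pronic_sub_pronic_mul_w` there. -/
def wSpan : Submodule ℤ (ℕ+ → ℤ) :=
  Submodule.span ℤ (Set.range fun (j : ℕ) (k : ℕ+) => w k j)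

theorem w_mem_wSpan (j : ℕ) : (fun k : ℕ+ => w k j) ∈ wSpan :=
  Submodule.subset_span ⟨j, rfl⟩

theorem one_mem_wSpan : (1 : ℕ+ → ℤ) ∈ wSpan := by
  convert w_mem_wSpan 1 using 1
  funext k
  exact (w_one_right k).symm

theorem w_mul_w_mem_wSpan (i j : ℕ) : (fun k : ℕ+ => w k i * w k j) ∈ wSpan := by
  rcases Nat.eq_zero_or_pos i with rfl | hi
  · simp only [w_zero_right, zero_mul]
    exact wSpan.zero_mem
  · have h : (fun k : ℕ+ => w k i * w k j) =
        ∑ l ∈ Finset.range (i + j), (wStructConst i j l : ℤ) • fun k : ℕ+ => w k l := by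
      funext k
      simp [w_mul_w (show 1 ≤ (k : ℕ) from k.pos) hi]
    rw [h]
    exact sum_mem fun l _ => wSpan.smul_mem _ (w_mem_wSpan l)

theorem mul_mem_wSpan {f g : ℕ+ → ℤ} (hf : f ∈ wSpan) (hg : g ∈ wSpan) : f * g ∈ wSpan := by
  have hle : wSpan * wSpan ≤ wSpan := by
    conv_lhs => rw [wSpan, Submodule.span_mul_span]
    rw [Submodule.span_le]
    rintro _ ⟨_, ⟨i, rfl⟩, _, ⟨j, rfl⟩, rfl⟩
    exact w_mul_w_mem_wSpan i j
  exact hle (Submodule.mul_mem_mul hf hg)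

/-- The ring of functions of `k ≥ 1` generated by the `k ↦ w k j`, which is just their span. -/
def wAlgebra : Subalgebra ℤ (ℕ+ → ℤ) :=
  wSpan.toSubalgebra one_mem_wSpan fun _ _ => mul_mem_wSpan

theorem w_mem_wAlgebra (j : ℕ) : (fun k : ℕ+ => w k j) ∈ wAlgebra :=
  w_mem_wSpan j

theorem pronic_mem_wAlgebra : (fun k : ℕ+ => pronic k) ∈ wAlgebra := by
  have h : (fun k : ℕ+ => pronic k) =
      (2 : ℤ) • ((fun k : ℕ+ => w k 2) + fun k : ℕ+ => w k 1) := by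
    funext k
    have hrec : (pronic k - pronic 1) * w k 1 = pronic 1 * w k 2 :=
      pronic_sub_pronic_mul_w k.pos 1
    rw [w_one_right, show pronic 1 = 2 from rfl] at hrec
    simp only [Pi.smul_apply, Pi.add_apply, smul_eq_mul, w_one_right]
    linear_combination hrec
  rw [h]
  exact wAlgebra.smul_mem (add_mem (w_mem_wAlgebra 2) (w_mem_wAlgebra 1)) 2

theorem alt_sum_pronic_mul_w (n j : ℕ) :
    ∑ k ∈ Finset.Icc 1 n, (-1 : ℤ) ^ k * (2 * k + 1) * (pronic k * w k j) =
      (-1) ^ n * ((n + 1) * (j * n.choose j * (n + j + 1).choose j : ℕ)) := by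
  induction n with
  | zero => rcases j with _ | j <;> simp
  | succ n ih =>
    have h₁ := cast_succ_mul_choose n j
    have h₂ := cast_succ_mul_choose (n + 1 + j) j
    rw [Finset.sum_Icc_succ_top (Nat.succ_pos n), ih, pronic_mul_w, pow_succ, add_right_comm n j 1]
    push_cast at *
    linear_combination (-1 : ℤ) ^ n * j * ((n + 1 + j).choose j * h₁ - (n + 1).choose j * h₂)

theorem mul_mul_div_gcd_two_eq_mul_lcm (n : ℕ) :
    n * (n + 1) * (n + 2) / Nat.gcd 2 n = (n + 1) * n.lcm (n + 2) := by
  have hgcd : n.gcd (n + 2) = Nat.gcd 2 n := by rw [Nat.gcd_self_add_right, Nat.gcd_comm]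
  apply Nat.div_eq_of_eq_mul_left (Nat.gcd_pos_of_pos_left n two_pos)
  rw [← hgcd, mul_assoc (n + 1), mul_comm (n.lcm _), Nat.gcd_mul_lcm]
  ring

theorem lcm_dvd_mul_choose_mul_choose (n j : ℕ) :
    n.lcm (n + 2) ∣ j * n.choose j * (n + j + 1).choose j := by
  apply Nat.lcm_dvd
  · exact (dvd_mul_choose n j).mul_right _
  · rcases j with _ | j
    · simp
    · have h := Nat.choose_succ_right_eq (n + (j + 1) + 1) j
      rw [show n + (j + 1) + 1 - j = n + 2 by omega] at h
      exact ⟨n.choose (j + 1) * (n + (j + 1) + 1).choose j, by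
        linear_combination n.choose (j + 1) * h⟩

theorem dvd_alt_sum_pronic_mul_w (n j : ℕ) :
    ((n * (n + 1) * (n + 2) / Nat.gcd 2 n : ℕ) : ℤ) ∣
      ∑ k ∈ Finset.Icc 1 n, (-1 : ℤ) ^ k * (2 * k + 1) * (pronic k * w k j) := by
  rw [alt_sum_pronic_mul_w, mul_mul_div_gcd_two_eq_mul_lcm]
  apply Dvd.dvd.mul_left
  exact_mod_cast mul_dvd_mul_left (n + 1) (lcm_dvd_mul_choose_mul_choose n j)

theorem sum_Icc_coe_pnat {M : Type*} [AddCommMonoid M] (f : ℕ → M) (a b : ℕ+) :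
    ∑ k ∈ Finset.Icc a b, f k = ∑ k ∈ Finset.Icc (a : ℕ) b, f k := by
  have h : (Finset.Icc a b).map ⟨_, PNat.coe_injective⟩ = Finset.Icc (a : ℕ) b :=
    PNat.map_subtype_embedding_Icc a b
  rw [← h, Finset.sum_map, Function.Embedding.coeFn_mk]

theorem dvd_alt_sum_of_mem_wAlgebra {f : ℕ+ → ℤ} (hf : f ∈ wAlgebra) (n : ℕ+) :
    ((n * (n + 1) * (n + 2) / Nat.gcd 2 n : ℕ) : ℤ) ∣
      ∑ k ∈ Finset.Icc 1 n, (-1 : ℤ) ^ (k : ℕ) * (2 * (k : ℕ) + 1) * (pronic k * f k) := by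
  change f ∈ wSpan at hf
  induction hf using Submodule.span_induction with
  | mem f hf =>
    obtain ⟨j, rfl⟩ := hf
    rw [sum_Icc_coe_pnat fun k => (-1 : ℤ) ^ k * (2 * k + 1) * (pronic k * w k j)]
    exact dvd_alt_sum_pronic_mul_w n j
  | zero => simp
  | add f g _ _ hf hg => simpa [mul_add, Finset.sum_add_distrib] using dvd_add hf hg
  | smul c f _ hf => simpa [mul_left_comm _ c, ← Finset.mul_sum] using hf.mul_left c

theorem coeff_wPoly {α k : ℕ} (hα : α ≠ 0) (hk : 1 ≤ k) (i : ℕ) :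
    (wPoly α k).coeff i = w k (i + 1) ^ α := by
  simp only [wPoly, finsetSum_coeff, coeff_C_mul_X_pow]
  rw [Finset.sum_eq_single (i + 1)]
  · simp
  · intro j hj hji
    have := (Finset.mem_Icc.mp hj).1
    exact if_neg (by omega)
  · intro hi
    rw [w_eq_zero_of_lt hk (by simpa using hi), zero_pow hα, ite_self]

theorem coeff_pow_mem {ι R S : Type*} [Semiring R] [SetLike S (ι → R)]
    [SubsemiringClass S (ι → R)] {A : S} {P : ι → R[X]}
    (hP : ∀ i, (fun k => (P k).coeff i) ∈ A) (m i : ℕ) : (fun k => (P k ^ m).coeff i) ∈ A := by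
  induction m generalizing i with
  | zero =>
    have h : (fun k => (P k ^ 0).coeff i) = if i = 0 then 1 else 0 := by
      funext k
      split_ifs <;> simp [coeff_one, *]
    rw [h]
    split_ifs
    exacts [one_mem A, zero_mem A]
  | succ m ih =>
    have h : (fun k => (P k ^ (m + 1)).coeff i) = ∑ x ∈ Finset.HasAntidiagonal.antidiagonal i,
        (fun k => (P k ^ m).coeff x.1) * fun k => (P k).coeff x.2 := by
      funext k
      simp [pow_succ, coeff_mul]
    rw [h]
    exact sum_mem fun x _ => mul_mem (ih x.1) (hP x.2)

theorem coeff_wPoly_pow_mem_wAlgebra {α : ℕ} (hα : α ≠ 0) (m i : ℕ) :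
    (fun k : ℕ+ => (wPoly α k ^ m).coeff i) ∈ wAlgebra := by
  refine coeff_pow_mem (P := fun k : ℕ+ => wPoly α k) (fun j => ?_) m i
  simp only [coeff_wPoly hα (PNat.pos _)]
  exact pow_mem (w_mem_wAlgebra (j + 1)) α

/-- For all positive integers `α, m, n, r`, every coefficient of
`∑_{k=1}^{n} (-1)^k k^r (k+1)^r (2k+1) w_k^{(α)}(x)^m` is divisible by
`n(n+1)(n+2)/gcd(2,n)`. -/
theorem coeff_dvd_alt_sum (α m n r : ℕ) (hα : 1 ≤ α) (hm : 1 ≤ m) (hn : 1 ≤ n) (hr : 1 ≤ r) :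
    ∀ i : ℕ, ((n * (n + 1) * (n + 2) / Nat.gcd 2 n : ℕ) : ℤ) ∣
      (∑ k ∈ Finset.Icc 1 n,
          ((-1 : ℤ) ^ k * (k : ℤ) ^ r * ((k : ℤ) + 1) ^ r * (2 * (k : ℤ) + 1)) • (wPoly α k) ^ m).coeff i := by
  intro i
  obtain ⟨s, rfl⟩ := Nat.exists_eq_add_of_le' hr
  lift n to ℕ+ using hn
  have hf : (fun k : ℕ+ => pronic k) ^ s * (fun k : ℕ+ => (wPoly α k ^ m).coeff i) ∈ wAlgebra :=
    mul_mem (pow_mem pronic_mem_wAlgebra s)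
      (coeff_wPoly_pow_mem_wAlgebra (Nat.one_le_iff_ne_zero.mp hα) m i)
  convert dvd_alt_sum_of_mem_wAlgebra hf n using 1
  rw [finsetSum_coeff]
  refine (sum_Icc_coe_pnat _ 1 n).symm.trans (Finset.sum_congr rfl fun k _ => ?_)
  simp only [coeff_smul, smul_eq_mul, Pi.mul_apply, Pi.pow_apply, pronic, mul_pow]
  ring
end

section
/- For all positive integers α, β, m, n, r, the least common multiple lcm(n, n+1, ..., n+2β+1) divides each coefficient of the polynomial 2·∑_{k=1}^{n} ((k)_β)^r·((k+β+1)_β)^r·(k+β)·∏_{i=0}^{2β-1} w_{k+i}^{(α)}(x)^m in ℤ[x]. -/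
open Polynomial

/-!
The sum is the value at `q = 1` of a `q`-analogue whose coefficients are polynomials in `q`. If
`f ∈ ℤ[q]` vanishes at all `N`-th roots of unity other than `1`, then `f(1)` is the sum of `f` over
all `N`-th roots of unity, hence `N` times an integer. So it suffices that for
`n ≤ N ≤ n + 2β + 1` the `q`-sum vanishes at every primitive `d`-th root of unity `ζ` with `1 < d`
and `d ∣ N`.

The `q`-analogue of `C(k,j) C(k+j,j)`, scaled by `q^(-kj)`, is up to a factor depending only on `j`
equal to `(q^(-k);q)_j (q^(k+1);q)_j / (q;q)_j²`, which is invariant under `k ↦ -1 - k`. At `q = ζ`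
the `q`-integers are `d`-periodic, and the `q`-Lucas theorem turns this symmetry into invariance
under the reflection `cd + a ↦ cd + (d - 1 - a)` within each block of length `d`. As
`w(k,j) = j C(k,j) C(k+j,j) / (k(k+1))`, the polynomials `w_k` inherit it, and the `k`-th summand of
the `q`-sum changes sign under `cd + a ↦ cd + (d - 2β - a)`. The `k` that this reflection does not
pair up within their block satisfy `d ∣ k + i` for some `i ≤ 2β`, and so their summands vanish. The
same holds for `n < k < N`, so the sum may be extended to complete blocks.
-/

section QAnalogues

variable {A : Type*} [CommRing A]

/-- The `q`-integer `[n] = 1 + q + ⋯ + q^(n-1)`. -/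
def qInt (q : A) (n : ℕ) : A := ∑ i ∈ Finset.range n, q ^ i

/-- The Gaussian binomial coefficient, defined by the `q`-Pascal recursion so that no division is
needed. -/
def qChoose (q : A) : ℕ → ℕ → A
  | _, 0 => 1
  | 0, _ + 1 => 0
  | n + 1, k + 1 => qChoose q n k + q ^ (k + 1) * qChoose q n (k + 1)

lemma qInt_add (q : A) (m n : ℕ) : qInt q (m + n) = qInt q m + q ^ m * qInt q n := by
  simp [qInt, Finset.sum_range_add, pow_add, Finset.mul_sum]

lemma qInt_succ (q : A) (n : ℕ) : qInt q (n + 1) = 1 + q * qInt q n := by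
  simp [qInt, Finset.sum_range_succ', pow_succ', Finset.mul_sum, add_comm]

lemma qInt_one_left (n : ℕ) : qInt (1 : A) n = n := by simp [qInt]

@[simp] lemma qChoose_zero_right (q : A) (n : ℕ) : qChoose q n 0 = 1 := by cases n <;> rfl

@[simp] lemma qChoose_zero_succ (q : A) (k : ℕ) : qChoose q 0 (k + 1) = 0 := rfl

lemma qChoose_succ_succ (q : A) (n k : ℕ) :
    qChoose q (n + 1) (k + 1) = qChoose q n k + q ^ (k + 1) * qChoose q n (k + 1) := rfl

lemma qChoose_eq_zero_of_lt (q : A) {n k : ℕ} (h : n < k) : qChoose q n k = 0 := by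
  induction n generalizing k with
  | zero =>
    obtain ⟨k, rfl⟩ := Nat.exists_eq_add_of_le' h
    rfl
  | succ n ih =>
    obtain ⟨k, rfl⟩ := Nat.exists_eq_add_of_le' (Nat.one_le_of_lt h)
    rw [qChoose_succ_succ, ih (by omega), ih (by omega), mul_zero, add_zero]

@[simp] lemma qChoose_self (q : A) (n : ℕ) : qChoose q n n = 1 := by
  induction n with
  | zero => rfl
  | succ n ih =>
    rw [qChoose_succ_succ, ih, qChoose_eq_zero_of_lt q n.lt_succ_self, mul_zero, add_zero]

lemma qChoose_one_left (n k : ℕ) : qChoose (1 : A) n k = n.choose k := by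
  induction n generalizing k with
  | zero => cases k <;> simp
  | succ n ih => cases k <;> simp [qChoose_succ_succ, ih, Nat.choose_succ_succ]

lemma qInt_succ_add_sub (q : A) {k n : ℕ} (h : k ≤ n) :
    qInt q (k + 1) + q ^ (k + 1) * qInt q (n - k) = qInt q (n + 1) := by
  rw [← qInt_add, show k + 1 + (n - k) = n + 1 by omega]

lemma qInt_mul_qChoose_succ_right (q : A) (n k : ℕ) :
    qInt q (k + 1) * qChoose q n (k + 1) = qInt q (n - k) * qChoose q n k := by
  induction n generalizing k with
  | zero => cases k <;> simp [qInt]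
  | succ n ih =>
    rcases le_or_gt k n with hk | hk
    · cases k with
      | zero =>
        have h0 := ih 0
        have hsplit := qInt_succ_add_sub q hk
        simp only [qChoose_succ_succ, qChoose_zero_right, Nat.sub_zero] at h0 hsplit ⊢
        linear_combination q ^ (0 + 1) * h0 + hsplit
      | succ k =>
        rw [qChoose_succ_succ, qChoose_succ_succ, Nat.add_sub_add_right]
        linear_combination q ^ (k + 1 + 1) * ih (k + 1) + ih k +
          (qInt_succ_add_sub q hk - qInt_succ_add_sub q (Nat.le_of_succ_le hk)) *
            qChoose q n (k + 1)
    · rw [qChoose_eq_zero_of_lt q (by omega), Nat.sub_eq_zero_of_le hk]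
      simp [qInt]

lemma qInt_mul_qChoose_succ_succ (q : A) (n k : ℕ) :
    qInt q (k + 1) * qChoose q (n + 1) (k + 1) = qInt q (n + 1) * qChoose q n k := by
  rcases le_or_gt k n with hk | hk
  · rw [qChoose_succ_succ]
    linear_combination q ^ (k + 1) * qInt_mul_qChoose_succ_right q n k +
      qInt_succ_add_sub q hk * qChoose q n k
  · simp [qChoose_eq_zero_of_lt q hk, qChoose_eq_zero_of_lt q (Nat.succ_lt_succ hk)]

/-- A `q`-analogue of `C(k,j) C(k+j,j)`, the `j`-th term of a Delannoy number, scaled by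
`q ^ (-kj)`. In this and the following definitions `p` stands for `q⁻¹`: an argument of its own
because `q` is specialised to the indeterminate of `ℤ[X]`. -/
def qDelannoy (q p : A) (k j : ℕ) : A :=
  p ^ (k * j) * (qChoose q k j * qChoose q (k + j) j)

lemma qDelannoy_eq_zero_of_lt (q p : A) {k j : ℕ} (h : k < j) : qDelannoy q p k j = 0 := by
  simp [qDelannoy, qChoose_eq_zero_of_lt q h]

lemma qInt_sq_mul_qDelannoy_succ (q p : A) (k j : ℕ) :
    qInt q (j + 1) ^ 2 * qDelannoy q p k (j + 1) =
      p ^ k * (qInt q (k - j) * qInt q (k + j + 1)) * qDelannoy q p k j := by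
  have hright := qInt_mul_qChoose_succ_right q k j
  have hsucc := qInt_mul_qChoose_succ_succ q (k + j) j
  simp only [qDelannoy, ← add_assoc, mul_add_one, pow_add]
  linear_combination p ^ (k * j) * p ^ k *
    (qInt q (j + 1) * qChoose q (k + j + 1) (j + 1) * hright +
      qInt q (k - j) * qChoose q k j * hsucc)

/-- A `q`-analogue of `w`, scaled by `q ^ (-k(j-1))`. -/
def qw (q p : A) (k j : ℕ) : A :=
  p ^ (k * (j - 1)) * (qChoose q (k - 1) (j - 1) * qChoose q (k + j) j -
    q * (qChoose q k j * qChoose q (k + j) (j - 1)))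

lemma qw_eq_zero_of_lt (q p : A) {k j : ℕ} (hk : 1 ≤ k) (h : k < j) : qw q p k j = 0 := by
  simp [qw, qChoose_eq_zero_of_lt q h, qChoose_eq_zero_of_lt q (Nat.sub_lt_sub_right hk h)]

lemma qw_one_one (k j : ℕ) : qw (1 : ℤ) 1 k j = w k j := by simp [qw, w, qChoose_one_left]

lemma pow_mul_qInt_mul_qInt_mul_qw (q p : A) {k j : ℕ} (hk : 1 ≤ k) (hj : 1 ≤ j) :
    p ^ k * (qInt q k * qInt q (k + 1)) * qw q p k j = qInt q j * qDelannoy q p k j := by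
  obtain ⟨k, rfl⟩ := Nat.exists_eq_add_of_le' hk
  obtain ⟨j, rfl⟩ := Nat.exists_eq_add_of_le' hj
  have hsucc := qInt_mul_qChoose_succ_succ q k j
  have hright := qInt_mul_qChoose_succ_right q (k + 1 + (j + 1)) j
  have hint := qInt_succ q (k + 1)
  rw [show k + 1 + (j + 1) - j = k + 1 + 1 by omega] at hright
  simp only [qw, qDelannoy, Nat.add_sub_cancel, mul_add_one (k + 1) j, pow_add p _ (k + 1)]
  linear_combination p ^ ((k + 1) * j) * p ^ (k + 1) *
    (-qInt q (k + 1 + 1) * qChoose q (k + 1 + (j + 1)) (j + 1) * hsucc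
      + q * qInt q (k + 1) * qChoose q (k + 1) (j + 1) * hright
      + qInt q (j + 1) * qChoose q (k + 1) (j + 1) * qChoose q (k + 1 + (j + 1)) (j + 1) * hint)

/-- A `q`-analogue of `wPoly`. -/
noncomputable def qwPoly (q p : A) (α k : ℕ) : A[X] :=
  ∑ j ∈ Finset.Icc 1 k, C (qw q p k j ^ α) * X ^ (j - 1)

lemma coeff_qwPoly (q p : A) {α k : ℕ} (hα : α ≠ 0) (hk : 1 ≤ k) (i : ℕ) :
    (qwPoly q p α k).coeff i = qw q p k (i + 1) ^ α := by
  rw [qwPoly, finsetSum_coeff, Finset.sum_eq_single (i + 1)]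
  · rw [Nat.add_sub_cancel, coeff_C_mul_X_pow, if_pos rfl]
  · intro j hj hne
    rw [Finset.mem_Icc] at hj
    rw [coeff_C_mul_X_pow, if_neg (by omega)]
  · intro hi
    rw [Finset.mem_Icc] at hi
    rw [qw_eq_zero_of_lt q p hk (by omega), zero_pow hα, C_0, zero_mul, coeff_zero]

lemma qwPoly_one_one (α k : ℕ) : qwPoly (1 : ℤ) 1 α k = wPoly α k := by
  simp only [qwPoly, wPoly, qw_one_one]

/-- A `q`-analogue of the scalar factor `2 ((k)_β)^r ((k+β+1)_β)^r (k+β)` of the `k`-th summand,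
scaled by a power of `q`. The factors of `(k)_β (k+β+1)_β` are grouped into pairs with sum
`2(k+β)`, which are swapped by the reflection. -/
def qWeight (q p : A) (β r k : ℕ) : A :=
  p ^ (k + β) * qInt q (2 * (k + β)) *
    (∏ c ∈ Finset.range β, p ^ (k + β) * (qInt q (k + c) * qInt q (k + 2 * β - c))) ^ r

lemma qWeight_one_one (β r k : ℕ) :
    qWeight (1 : ℤ) 1 β r k =
      2 * ((k.ascFactorial β : ℤ) ^ r * ((k + β + 1).ascFactorial β : ℤ) ^ r * ((k : ℤ) + β)) := by
  have hupper : ∏ c ∈ Finset.range β, ((k + 2 * β - c : ℕ) : ℤ) = (k + β + 1).ascFactorial β := by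
    rw [Nat.ascFactorial_eq_prod_range, Nat.cast_prod, ← Finset.prod_range_reflect]
    refine Finset.prod_congr rfl fun c hc => ?_
    rw [Finset.mem_range] at hc
    congr 1
    omega
  simp only [qWeight, qInt_one_left, one_pow, one_mul, Finset.prod_mul_distrib, hupper]
  rw [← Nat.cast_prod, ← Nat.ascFactorial_eq_prod_range]
  push_cast
  ring

/-- A `q`-analogue of the polynomial whose coefficients are to be shown divisible. -/
noncomputable def qSum (q p : A) (α β m r n : ℕ) : A[X] :=
  ∑ k ∈ Finset.Icc 1 n,
    C (qWeight q p β r k) * ∏ j ∈ Finset.range (2 * β), qwPoly q p α (k + j) ^ m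

lemma qSum_one_one (α β m r n : ℕ) :
    qSum (1 : ℤ) 1 α β m r n =
      2 * ∑ k ∈ Finset.Icc 1 n,
        (((k.ascFactorial β : ℤ)) ^ r * (((k + β + 1).ascFactorial β : ℤ)) ^ r * ((k : ℤ) + β)) •
          ∏ j ∈ Finset.range (2 * β), (wPoly α (k + j)) ^ m := by
  simp only [qSum, qwPoly_one_one, qWeight_one_one, Finset.mul_sum, smul_eq_C_mul, C_mul, mul_assoc,
    map_ofNat]

section Map

variable {B : Type*} [CommRing B] (f : A →+* B)

lemma map_qInt (q : A) (n : ℕ) : f (qInt q n) = qInt (f q) n := by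
  simp only [qInt, map_sum, map_pow]

lemma map_qChoose (q : A) (n k : ℕ) : f (qChoose q n k) = qChoose (f q) n k := by
  induction n generalizing k with
  | zero => cases k <;> simp
  | succ n ih => cases k <;> simp [qChoose_succ_succ, ih]

lemma map_qw (q p : A) (k j : ℕ) : f (qw q p k j) = qw (f q) (f p) k j := by
  simp only [qw, map_mul, map_sub, map_pow, map_qChoose]

lemma map_qWeight (q p : A) (β r k : ℕ) : f (qWeight q p β r k) = qWeight (f q) (f p) β r k := by
  simp only [qWeight, map_mul, map_pow, map_prod, map_qInt]

lemma map_qSum (q p : A) (α β m r n : ℕ) :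
    (qSum q p α β m r n).map f = qSum (f q) (f p) α β m r n := by
  simp only [qSum, qwPoly, Polynomial.map_sum, Polynomial.map_mul, Polynomial.map_prod,
    Polynomial.map_pow, map_C, map_X, ← map_qw, ← map_qWeight, map_pow f]

end Map

end QAnalogues

section RootsOfUnity

variable {R : Type*} [CommRing R] [IsDomain R] {ζ : R} {d : ℕ}

lemma geom_sum_pow_eq_ite (hζ : IsPrimitiveRoot ζ d) (i : ℕ) :
    ∑ s ∈ Finset.range d, (ζ ^ i) ^ s = if d ∣ i then (d : R) else 0 := by
  split_ifs with hi
  · simp [(hζ.pow_eq_one_iff_dvd i).2 hi]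
  · have hne : ζ ^ i - 1 ≠ 0 := sub_ne_zero.2 (mt (hζ.pow_eq_one_iff_dvd i).1 hi)
    refine (mul_eq_zero.1 ?_).resolve_right hne
    rw [geom_sum_mul, pow_right_comm, hζ.pow_eq_one, one_pow, sub_self]

lemma qInt_eq_zero_iff (hζ : IsPrimitiveRoot ζ d) (hd : 1 < d) {n : ℕ} :
    qInt ζ n = 0 ↔ d ∣ n := by
  have hgeom : qInt ζ n * (ζ - 1) = ζ ^ n - 1 := geom_sum_mul ζ n
  rw [← hζ.pow_eq_one_iff_dvd, ← sub_eq_zero (a := ζ ^ n), ← hgeom, mul_eq_zero,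
    or_iff_left (sub_ne_zero.2 (hζ.ne_one hd))]

lemma qChoose_order_eq_zero (hζ : IsPrimitiveRoot ζ d) {k : ℕ} (hk : 0 < k) (hkd : k < d) :
    qChoose ζ d k = 0 := by
  have hd : 1 < d := Nat.lt_of_le_of_lt hk hkd
  obtain ⟨k, rfl⟩ := Nat.exists_eq_add_of_le' hk
  obtain ⟨n, rfl⟩ := Nat.exists_eq_add_of_le' hd.le
  have hmul := qInt_mul_qChoose_succ_succ ζ n k
  rw [(qInt_eq_zero_iff hζ hd).2 dvd_rfl, zero_mul] at hmul
  exact (mul_eq_zero.1 hmul).resolve_left fun h0 =>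
    Nat.not_dvd_of_pos_of_lt hk hkd ((qInt_eq_zero_iff hζ hd).1 h0)

lemma qChoose_add_order (hζ : IsPrimitiveRoot ζ d) (n : ℕ) {k : ℕ} (hk : k < d) :
    qChoose ζ (n + d) k = qChoose ζ n k := by
  induction n generalizing k with
  | zero =>
    cases k with
    | zero => simp
    | succ k => rw [zero_add, qChoose_order_eq_zero hζ k.succ_pos hk, qChoose_zero_succ]
  | succ n ih =>
    cases k with
    | zero => simp
    | succ k =>
      rw [Nat.add_right_comm, qChoose_succ_succ, qChoose_succ_succ, ih hk, ih (by omega)]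

lemma qChoose_add_order_add_order (hζ : IsPrimitiveRoot ζ d) (hd : 0 < d) (n k : ℕ) :
    qChoose ζ (n + d) (k + d) = qChoose ζ n (k + d) + qChoose ζ n k := by
  obtain ⟨e, rfl⟩ := Nat.exists_eq_add_of_le' hd
  induction n generalizing k with
  | zero =>
    cases k with
    | zero => simp
    | succ k =>
      rw [qChoose_eq_zero_of_lt ζ (by omega), qChoose_eq_zero_of_lt ζ (by omega),
        qChoose_zero_succ, add_zero]
  | succ n ih =>
    have hpow (k : ℕ) : ζ ^ (k + e + 1) = ζ ^ k := by
      rw [add_assoc, pow_add, hζ.pow_eq_one, mul_one]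
    rw [Nat.add_right_comm, ← add_assoc k e 1, qChoose_succ_succ, qChoose_succ_succ, hpow,
      add_assoc k e 1, ih k]
    cases k with
    | zero =>
      rw [zero_add, qChoose_add_order hζ n e.lt_succ_self, qChoose_zero_right, qChoose_zero_right]
      ring
    | succ k =>
      rw [show k + 1 + e = k + (e + 1) by omega, ih k, qChoose_succ_succ]
      ring

/-- The `q`-Lucas theorem. -/
lemma qChoose_mul_add (hζ : IsPrimitiveRoot ζ d) (c i : ℕ) {a j : ℕ} (ha : a < d) (hj : j < d) :
    qChoose ζ (c * d + a) (i * d + j) = c.choose i * qChoose ζ a j := by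
  induction c generalizing i with
  | zero =>
    cases i with
    | zero => simp
    | succ i =>
      rw [qChoose_eq_zero_of_lt ζ (by rw [add_one_mul]; omega)]
      simp
  | succ c ih =>
    rw [add_one_mul, Nat.add_right_comm]
    cases i with
    | zero =>
      have hzero := ih 0
      rw [zero_mul, zero_add] at hzero ⊢
      rw [qChoose_add_order hζ _ hj, hzero, Nat.choose_zero_right, Nat.choose_zero_right]
    | succ i =>
      have hsucc := ih (i + 1)
      rw [add_one_mul, Nat.add_right_comm (i * d)] at hsucc ⊢
      rw [qChoose_add_order_add_order hζ (Nat.zero_lt_of_lt ha), hsucc, ih i,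
        Nat.choose_succ_succ]
      push_cast
      ring

lemma qChoose_mul_add_mul_qChoose (hζ : IsPrimitiveRoot ζ d) (c i : ℕ) {a j : ℕ} (ha : a < d)
    (hj : j < d) :
    qChoose ζ (c * d + a) (i * d + j) * qChoose ζ (c * d + a + (i * d + j)) (i * d + j) =
      c.choose i * (c + i).choose i * (qChoose ζ a j * qChoose ζ (a + j) j) := by
  rw [qChoose_mul_add hζ c i ha hj]
  rcases lt_or_ge (a + j) d with hlt | hge
  · rw [show c * d + a + (i * d + j) = (c + i) * d + (a + j) by ring,
      qChoose_mul_add hζ _ i hlt hj]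
    ring
  · -- The addition of `a` and `j` carries, and both sides vanish.
    obtain ⟨b, hb⟩ := Nat.exists_eq_add_of_le' hge
    rw [show c * d + a + (i * d + j) = (c + i + 1) * d + b by linear_combination hb,
      qChoose_mul_add hζ _ i (by omega) hj, hb, qChoose_add_order hζ b hj,
      qChoose_eq_zero_of_lt ζ (show b < j by omega)]
    simp

lemma qWeight_eq_zero (hζ : IsPrimitiveRoot ζ d) (hd : 1 < d) (p : R) {β r k i : ℕ} (hr : r ≠ 0)
    (hi : i ≤ 2 * β) (h : d ∣ k + i) : qWeight ζ p β r k = 0 := by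
  have hzero : qInt ζ (k + i) = 0 := (qInt_eq_zero_iff hζ hd).2 h
  rcases eq_or_ne i β with rfl | hne
  · rw [qWeight, (qInt_eq_zero_iff hζ hd).2 (h.mul_left 2), mul_zero, zero_mul]
  · rw [qWeight, mul_eq_zero, pow_eq_zero_iff hr, Finset.prod_eq_zero_iff]
    right
    rcases lt_or_gt_of_ne hne with hlt | hgt
    · exact ⟨i, Finset.mem_range.2 hlt, by rw [hzero, zero_mul, mul_zero]⟩
    · refine ⟨2 * β - i, Finset.mem_range.2 (by omega), ?_⟩
      rw [show k + 2 * β - (2 * β - i) = k + i by omega, hzero, mul_zero, mul_zero]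

end RootsOfUnity

section Reflection

variable {K : Type*} [Field K] {ζ : K} {d : ℕ}

lemma inv_pow_mul_qInt (hζ : IsPrimitiveRoot ζ d) (hd : 1 < d) {m n : ℕ} (h : d ∣ m + n) :
    ζ⁻¹ ^ m * qInt ζ m = -qInt ζ n := by
  have hzero := (qInt_eq_zero_iff hζ hd).2 h
  have hcancel : ζ⁻¹ ^ m * ζ ^ m = 1 := by
    rw [← mul_pow, inv_mul_cancel₀ (hζ.ne_zero (by omega)), one_pow]
  rw [qInt_add] at hzero
  linear_combination ζ⁻¹ ^ m * hzero - qInt ζ n * hcancel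

lemma inv_pow_mul_qInt_mul_qInt_reflect (hζ : IsPrimitiveRoot ζ d) (hd : 1 < d)
    {e e' x y x' y' : ℕ} (hx : d ∣ x' + y) (hy : d ∣ y' + x) (he : e + (x' + y') ≡ e' [MOD d]) :
    ζ⁻¹ ^ e' * (qInt ζ x' * qInt ζ y') = ζ⁻¹ ^ e * (qInt ζ x * qInt ζ y) := by
  calc ζ⁻¹ ^ e' * (qInt ζ x' * qInt ζ y')
      = ζ⁻¹ ^ e * ((ζ⁻¹ ^ x' * qInt ζ x') * (ζ⁻¹ ^ y' * qInt ζ y')) := by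
        rw [← pow_eq_pow_of_modEq he hζ.inv.pow_eq_one]
        ring
    _ = ζ⁻¹ ^ e * (qInt ζ x * qInt ζ y) := by
        rw [inv_pow_mul_qInt hζ hd hx, inv_pow_mul_qInt hζ hd hy]
        ring

lemma qDelannoy_mul_add (hζ : IsPrimitiveRoot ζ d) (c i : ℕ) {a j : ℕ} (ha : a < d)
    (hj : j < d) :
    qDelannoy ζ ζ⁻¹ (c * d + a) (i * d + j) =
      c.choose i * (c + i).choose i * qDelannoy ζ ζ⁻¹ a j := by
  have hexp : (c * d + a) * (i * d + j) ≡ a * j [MOD d] := by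
    simp [Nat.ModEq, Nat.mul_mod]
  rw [qDelannoy, qDelannoy, qChoose_mul_add_mul_qChoose hζ c i ha hj,
    pow_eq_pow_of_modEq hexp hζ.inv.pow_eq_one]
  ring

lemma qDelannoy_reflect_of_lt (hζ : IsPrimitiveRoot ζ d) {a a' j : ℕ} (h : a + a' + 1 = d)
    (hj : j < d) : qDelannoy ζ ζ⁻¹ a' j = qDelannoy ζ ζ⁻¹ a j := by
  induction j with
  | zero => simp [qDelannoy]
  | succ j ih =>
    have hd : 1 < d := by omega
    have hne : qInt ζ (j + 1) ^ 2 ≠ 0 := pow_ne_zero _ fun h0 =>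
      Nat.not_dvd_of_pos_of_lt j.succ_pos hj ((qInt_eq_zero_iff hζ hd).1 h0)
    have ih := ih (by omega)
    refine mul_left_cancel₀ hne ?_
    rw [qInt_sq_mul_qDelannoy_succ, qInt_sq_mul_qDelannoy_succ, ih]
    by_cases hja : j ≤ a ∧ j ≤ a'
    · have hexp : a + (a' - j + (a' + j + 1)) ≡ a' [MOD d] := by
        rw [show a + (a' - j + (a' + j + 1)) = a' + d by omega]
        exact Nat.add_modEq_right
      rw [inv_pow_mul_qInt_mul_qInt_reflect hζ hd (x := a - j) (y := a + j + 1)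
        (dvd_of_eq (by omega)) (dvd_of_eq (by omega)) hexp]
    · have hzero : qDelannoy ζ ζ⁻¹ a j = 0 := by
        rcases lt_or_ge a j with hlt | hge
        · exact qDelannoy_eq_zero_of_lt _ _ hlt
        · rw [← ih]
          exact qDelannoy_eq_zero_of_lt _ _ (by omega)
      rw [hzero, mul_zero, mul_zero]

lemma qDelannoy_reflect (hζ : IsPrimitiveRoot ζ d) (c j : ℕ) {a a' : ℕ} (h : a + a' + 1 = d) :
    qDelannoy ζ ζ⁻¹ (c * d + a') j = qDelannoy ζ ζ⁻¹ (c * d + a) j := by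
  have hj : j % d < d := Nat.mod_lt _ (by omega)
  rw [← Nat.div_add_mod' j d, qDelannoy_mul_add hζ c _ (by omega) hj,
    qDelannoy_mul_add hζ c _ (by omega) hj, qDelannoy_reflect_of_lt hζ h hj]

lemma qw_reflect (hζ : IsPrimitiveRoot ζ d) (c : ℕ) {a a' j : ℕ} (h : a + a' + 1 = d)
    (ha : 1 ≤ a) (ha' : 1 ≤ a') (hj : 1 ≤ j) :
    qw ζ ζ⁻¹ (c * d + a') j = qw ζ ζ⁻¹ (c * d + a) j := by
  have hd : 1 < d := by omega
  have hint (b : ℕ) (hb : 1 ≤ b) (hbd : b < d) : qInt ζ (c * d + b) ≠ 0 := by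
    rw [Ne, qInt_eq_zero_iff hζ hd, Nat.dvd_add_right (Nat.dvd_mul_left d c)]
    exact Nat.not_dvd_of_pos_of_lt hb hbd
  have hne : ζ⁻¹ ^ (c * d + a) * (qInt ζ (c * d + a) * qInt ζ (c * d + a + 1)) ≠ 0 :=
    mul_ne_zero (pow_ne_zero _ (inv_ne_zero (hζ.ne_zero (by omega))))
      (mul_ne_zero (hint a ha (by omega)) (hint (a + 1) (by omega) (by omega)))
  have hdvd : d ∣ c * d + a' + (c * d + a + 1) := ⟨2 * c + 1, by linear_combination h⟩
  have hexp : c * d + a + (c * d + a' + (c * d + a' + 1)) ≡ c * d + a' [MOD d] := by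
    rw [show c * d + a + (c * d + a' + (c * d + a' + 1)) =
      c * d + a' + (c * d + a' + (c * d + a + 1)) by ring]
    exact (Nat.modEq_zero_iff_dvd.2 hdvd).add_left (c * d + a')
  have hprefactor :
      ζ⁻¹ ^ (c * d + a') * (qInt ζ (c * d + a') * qInt ζ (c * d + a' + 1)) =
        ζ⁻¹ ^ (c * d + a) * (qInt ζ (c * d + a) * qInt ζ (c * d + a + 1)) :=
    inv_pow_mul_qInt_mul_qInt_reflect hζ hd hdvd (hdvd.trans (dvd_of_eq (by ring))) hexp
  refine mul_left_cancel₀ hne ?_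
  rw [pow_mul_qInt_mul_qInt_mul_qw ζ ζ⁻¹ (by omega) hj, ← hprefactor,
    pow_mul_qInt_mul_qInt_mul_qw ζ ζ⁻¹ (by omega) hj, qDelannoy_reflect hζ c j h]

lemma qwPoly_reflect (hζ : IsPrimitiveRoot ζ d) {α : ℕ} (hα : α ≠ 0) (c : ℕ) {a a' : ℕ}
    (h : a + a' + 1 = d) (ha : 1 ≤ a) (ha' : 1 ≤ a') :
    qwPoly ζ ζ⁻¹ α (c * d + a') = qwPoly ζ ζ⁻¹ α (c * d + a) := by
  ext i
  rw [coeff_qwPoly _ _ hα (by omega), coeff_qwPoly _ _ hα (by omega),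
    qw_reflect hζ c h ha ha' i.succ_pos]

lemma prod_qwPoly_reflect (hζ : IsPrimitiveRoot ζ d) {α : ℕ} (hα : α ≠ 0) (b c m : ℕ)
    {a a' : ℕ} (h : a + a' + b = d) (ha : 1 ≤ a) (ha' : 1 ≤ a') :
    ∏ j ∈ Finset.range b, qwPoly ζ ζ⁻¹ α (c * d + a' + j) ^ m =
      ∏ j ∈ Finset.range b, qwPoly ζ ζ⁻¹ α (c * d + a + j) ^ m := by
  rw [← Finset.prod_range_reflect]
  refine Finset.prod_congr rfl fun j hj => ?_
  rw [Finset.mem_range] at hj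
  rw [add_assoc, add_assoc,
    qwPoly_reflect hζ hα c (a := a + j) (by omega) (by omega) (by omega)]

lemma qWeight_reflect (hζ : IsPrimitiveRoot ζ d) (hd : 1 < d) (r : ℕ) {β k k' : ℕ}
    (h : d ∣ k + k' + 2 * β) : qWeight ζ ζ⁻¹ β r k' = -qWeight ζ ζ⁻¹ β r k := by
  have hexp : k + β + 2 * (k' + β) ≡ k' + β [MOD d] := by
    rw [show k + β + 2 * (k' + β) = k' + β + (k + k' + 2 * β) by ring]
    exact (Nat.modEq_zero_iff_dvd.2 h).add_left (k' + β)
  have hcentre : ζ⁻¹ ^ (k' + β) * qInt ζ (2 * (k' + β)) =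
      -(ζ⁻¹ ^ (k + β) * qInt ζ (2 * (k + β))) := by
    have hdvd : d ∣ 2 * (k' + β) + 2 * (k + β) := by
      rw [show 2 * (k' + β) + 2 * (k + β) = 2 * (k + k' + 2 * β) by ring]
      exact h.mul_left 2
    rw [← pow_eq_pow_of_modEq hexp hζ.inv.pow_eq_one, pow_add, mul_assoc,
      inv_pow_mul_qInt hζ hd hdvd, mul_neg]
  have hpairs : ∀ c ∈ Finset.range β,
      ζ⁻¹ ^ (k' + β) * (qInt ζ (k' + c) * qInt ζ (k' + 2 * β - c)) =
        ζ⁻¹ ^ (k + β) * (qInt ζ (k + c) * qInt ζ (k + 2 * β - c)) := by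
    intro c hc
    rw [Finset.mem_range] at hc
    refine inv_pow_mul_qInt_mul_qInt_reflect hζ hd (h.trans (dvd_of_eq (by omega)))
      (h.trans (dvd_of_eq (by omega))) ?_
    rwa [show k' + c + (k' + 2 * β - c) = 2 * (k' + β) by omega]
  rw [qWeight, qWeight, hcentre, Finset.prod_congr rfl hpairs, neg_mul]

end Reflection

section BlockSums

variable {M : Type*} [AddCommGroup M] [IsAddTorsionFree M]

lemma sum_Ico_eq_zero_of_reflect {g : ℕ → M} {s : ℕ}
    (h : ∀ a a', 1 ≤ a → 1 ≤ a' → a + a' = s → g a' = -g a) : ∑ a ∈ Finset.Ico 1 s, g a = 0 := by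
  rw [← self_eq_neg, ← Finset.sum_neg_distrib]
  calc ∑ a ∈ Finset.Ico 1 s, g a
      = ∑ a ∈ Finset.Ico 1 s, g (s - a) := by
        rw [Finset.sum_Ico_reflect g 1 s.le_succ, Nat.add_sub_cancel_left, Nat.add_sub_cancel]
    _ = ∑ a ∈ Finset.Ico 1 s, -g a := by
        refine Finset.sum_congr rfl fun a ha => ?_
        rw [Finset.mem_Ico] at ha
        exact h a (s - a) ha.1 (by omega) (by omega)

lemma sum_Icc_eq_zero_of_block_reflect {F : ℕ → M} {b d n N : ℕ} (hnN : n ≤ N)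
    (hNn : N ≤ n + b + 1) (hdvd : d ∣ N) (hzero : ∀ k i, i ≤ b → d ∣ k + i → F k = 0)
    (hrefl : ∀ c a a', 1 ≤ a → 1 ≤ a' → a + a' + b = d → F (c * d + a') = -F (c * d + a)) :
    ∑ k ∈ Finset.Icc 1 n, F k = 0 := by
  have hblock (c : ℕ) : ∑ a ∈ Finset.range d, F (c * d + a) = 0 := by
    rw [← sum_Ico_eq_zero_of_reflect (g := fun a => F (c * d + a)) (s := d - b)
      fun a a' ha ha' h => hrefl c a a' ha ha' (by omega)]
    refine Finset.sum_congr_of_eq_on_inter (fun a ha ha' => ?_)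
      (fun a ha ha' => absurd ha' ?_) (fun _ _ _ => rfl)
    · rw [Finset.mem_range] at ha
      rw [Finset.mem_Ico] at ha'
      rcases Nat.eq_zero_or_pos a with rfl | hpos
      · exact hzero _ 0 b.zero_le (Nat.dvd_mul_left d c)
      · exact hzero _ (d - a) (by omega) ⟨c + 1, by rw [mul_add_one, mul_comm d c]; omega⟩
    · rw [Finset.mem_Ico] at ha
      simp only [Finset.mem_range, not_not]
      omega
  have hblocks (e : ℕ) : ∑ k ∈ Finset.range (e * d), F k = 0 := by
    induction e with
    | zero => rw [zero_mul, Finset.sum_range_zero]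
    | succ e ih => rw [add_one_mul, Finset.sum_range_add, ih, hblock, add_zero]
  obtain ⟨e, he⟩ := exists_eq_mul_left_of_dvd hdvd
  rw [← hblocks e, ← he]
  refine Finset.sum_congr_of_eq_on_inter (fun k hk hk' => ?_) (fun k hk hk' => ?_)
    (fun _ _ _ => rfl)
  · rw [Finset.mem_Icc] at hk
    rw [Finset.mem_range] at hk'
    exact hzero k 0 b.zero_le (by rwa [show k + 0 = N by omega])
  · rw [Finset.mem_range] at hk
    rw [Finset.mem_Icc] at hk'
    rcases Nat.eq_zero_or_pos k with rfl | hpos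
    · exact hzero 0 0 b.zero_le (dvd_zero d)
    · exact hzero k (N - k) (by omega) (by rwa [Nat.add_sub_cancel' hk.le])

end BlockSums

lemma qSum_eq_zero {K : Type*} [Field K] [CharZero K] {ζ : K} {α β n r N : ℕ} (m : ℕ)
    (hα : α ≠ 0) (hr : r ≠ 0) (hN : N ∈ Finset.Icc n (n + 2 * β + 1)) (hN0 : N ≠ 0)
    (hζN : ζ ^ N = 1) (hζ1 : ζ ≠ 1) : qSum ζ ζ⁻¹ α β m r n = 0 := by
  rw [Finset.mem_Icc] at hN
  have hζ := IsPrimitiveRoot.orderOf ζ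
  have hdN : orderOf ζ ∣ N := orderOf_dvd_of_pow_eq_one hζN
  have hd : 1 < orderOf ζ := Nat.one_lt_iff_ne_zero_and_ne_one.2
    ⟨ne_zero_of_dvd_ne_zero hN0 hdN, mt orderOf_eq_one_iff.1 hζ1⟩
  generalize orderOf ζ = d at hζ hdN hd
  refine sum_Icc_eq_zero_of_block_reflect hN.1 hN.2 hdN (fun k i hi h => ?_)
    fun c a a' ha ha' h => ?_
  · rw [qWeight_eq_zero hζ hd _ hr hi h, C_0, zero_mul]
  · have hdvd : d ∣ c * d + a + (c * d + a') + 2 * β := ⟨2 * c + 1, by linear_combination h⟩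
    rw [qWeight_reflect hζ hd r hdvd, prod_qwPoly_reflect hζ hα _ c m h ha ha', C_neg, neg_mul]

lemma natCast_dvd_eval_one {f : ℤ[X]} {N : ℕ} (hN : N ≠ 0)
    (h : ∀ ζ : ℂ, ζ ^ N = 1 → ζ ≠ 1 → aeval ζ f = 0) : (N : ℤ) ∣ f.eval 1 := by
  obtain ⟨ω, hω⟩ : ∃ ω : ℂ, IsPrimitiveRoot ω N := ⟨_, Complex.isPrimitiveRoot_exp N hN⟩
  refine ⟨∑ i ∈ Finset.range (f.natDegree + 1) with N ∣ i, f.coeff i,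
    Int.cast_injective (α := ℂ) ?_⟩
  calc ((f.eval 1 : ℤ) : ℂ)
      = ∑ s ∈ Finset.range N, aeval (ω ^ s) f := by
        rw [Finset.sum_eq_single_of_mem 0 (Finset.mem_range.2 (Nat.pos_of_ne_zero hN))]
        · simp [aeval_def, eval₂_at_one]
        · intro s hs hs0
          refine h _ ?_ (hω.pow_ne_one_of_pos_of_lt hs0 (Finset.mem_range.1 hs))
          rw [pow_right_comm, hω.pow_eq_one, one_pow]
    _ = ∑ i ∈ Finset.range (f.natDegree + 1), f.coeff i * ∑ s ∈ Finset.range N, (ω ^ i) ^ s := by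
        simp only [aeval_eq_sum_range, zsmul_eq_mul, Finset.mul_sum]
        rw [Finset.sum_comm]
        simp only [pow_right_comm]
    _ = ((N * ∑ i ∈ Finset.range (f.natDegree + 1) with N ∣ i, f.coeff i : ℤ) : ℂ) := by
        simp only [geom_sum_pow_eq_ite hω, mul_ite, mul_zero, ← Finset.sum_filter,
          ← Finset.sum_mul, mul_comm (N : ℤ)]
        push_cast
        rfl

lemma natCast_dvd_coeff_qSum_one {α β n r N : ℕ} (m i : ℕ) (hα : α ≠ 0) (hr : r ≠ 0)
    (hN : N ∈ Finset.Icc n (n + 2 * β + 1)) (hN0 : N ≠ 0) :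
    (N : ℤ) ∣ (qSum (1 : ℤ) 1 α β m r n).coeff i := by
  -- `X ^ (N - 1)` takes the value `ζ⁻¹` at every `N`-th root of unity `ζ`.
  have hmap {B : Type} [CommRing B] (φ : ℤ[X] →+* B) :
      φ ((qSum X (X ^ (N - 1)) α β m r n).coeff i) =
        (qSum (φ X) (φ X ^ (N - 1)) α β m r n).coeff i := by
    rw [← map_pow, ← map_qSum, coeff_map]
  have hone := hmap (evalRingHom 1)
  rw [coe_evalRingHom, eval_X, one_pow] at hone
  rw [← hone]
  refine natCast_dvd_eval_one hN0 fun ζ hζN hζ1 => ?_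
  have hinv : ζ ^ (N - 1) = ζ⁻¹ := eq_inv_of_mul_eq_one_left (by rw [pow_sub_one_mul hN0, hζN])
  have hroot := hmap (aeval ζ).toRingHom
  simp only [AlgHom.toRingHom_eq_coe, RingHom.coe_coe, aeval_X] at hroot
  rw [hroot, hinv, qSum_eq_zero m hα hr hN hN0 hζN hζ1, coeff_zero]

/-- For all positive integers `α, β, m, n, r`, `lcm(n,n+1,…,n+2β+1)` divides every coefficient of
`2·∑_{k=1}^{n} ((k)_β)^r ((k+β+1)_β)^r (k+β) ∏_{i=0}^{2β-1} w_{k+i}^{(α)}(x)^m`,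
where `(x)_β = x(x+1)⋯(x+β-1)` is the rising factorial. -/
theorem lcm_dvd_coeff_sum (α β m n r : ℕ)
    (hα : 1 ≤ α) (hβ : 1 ≤ β) (hm : 1 ≤ m) (hn : 1 ≤ n) (hr : 1 ≤ r) :
    ∀ i : ℕ, ((Finset.lcm (Finset.Icc n (n + 2 * β + 1)) id : ℕ) : ℤ) ∣
      (2 * ∑ k ∈ Finset.Icc 1 n,
          (((k.ascFactorial β : ℤ)) ^ r * (((k + β + 1).ascFactorial β : ℤ)) ^ r * ((k : ℤ) + β)) •
            ∏ j ∈ Finset.range (2 * β), (wPoly α (k + j)) ^ m).coeff i := by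
  intro i
  rw [← qSum_one_one, Int.natCast_dvd]
  refine Finset.lcm_dvd fun N hN => Int.natCast_dvd.1 ?_
  have hN0 : N ≠ 0 := Nat.ne_zero_of_lt (hn.trans (Finset.mem_Icc.1 hN).1)
  exact natCast_dvd_coeff_qSum_one m i (Nat.ne_zero_of_lt hα) (Nat.ne_zero_of_lt hr) hN hN0
end
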